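/- Multivariate Pólya extension of the Dini theorem: Let m ≥ 1 and for each n ∈ ℕ let f_n : [0,1]^m → ℝ be nondecreasing in each coordinate (that is, f_n(x) ≤ f_n(y) whenever x ≤ y componentwise). Assume that f_n(x) → f(x) as n → ∞ for every x ∈ [0,1]^m, where f is continuous on [0,1]^m. Then sup_{x ∈ [0,1]^m} |f_n(x) − f(x)| → 0 as n → ∞. -/

import Mathlib

/-!
Around each point `x₀` of the cube there is a small order interval `[lo, hi]` (a box of radius `δ`
truncated to the cube) which is a neighbourhood of `x₀` in the cube and on which `g` varies by
little. Monotonicity squeezes `f n x` between `f n lo` and `f n hi` for every `x` in the box, so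
convergence at the two points `lo` and `hi` alone controls `f n` on the whole box. Hence the
convergence is locally uniform on the cube, and uniform by compactness.
-/

open Filter Topology

/-- **Multivariate Pólya extension of the Dini theorem.** If `f_n : [0,1]^m → ℝ`
are nondecreasing in each coordinate and converge pointwise on `[0,1]^m` to a
continuous function `f`, then the convergence is uniform:
`sup_{x ∈ [0,1]^m} |f_n(x) − f(x)| → 0`. -/
theorem multivariate_polya_dini
    (m : ℕ) (hm : 1 ≤ m)
    (f : ℕ → (Fin m → ℝ) → ℝ) (g : (Fin m → ℝ) → ℝ)
    -- each `f n` is nondecreasing in each coordinate on `[0,1]^m`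
    (hmono : ∀ n, ∀ x ∈ Set.Icc (0 : Fin m → ℝ) 1, ∀ y ∈ Set.Icc (0 : Fin m → ℝ) 1,
      x ≤ y → f n x ≤ f n y)
    -- pointwise convergence on `[0,1]^m`
    (hlim : ∀ x ∈ Set.Icc (0 : Fin m → ℝ) 1,
      Tendsto (fun n => f n x) atTop (𝓝 (g x)))
    -- the limit is continuous on `[0,1]^m`
    (hcont : ContinuousOn g (Set.Icc (0 : Fin m → ℝ) 1)) :
    Tendsto (fun n => ⨆ x ∈ Set.Icc (0 : Fin m → ℝ) 1, |f n x - g x|) atTop (𝓝 0) := by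
  have hloc : TendstoLocallyUniformlyOn f g atTop (Set.Icc (0 : Fin m → ℝ) 1) := by
    rw [Metric.tendstoLocallyUniformlyOn_iff]
    intro ε hε x₀ hx₀
    obtain ⟨η, hη, hg⟩ := Metric.continuousOn_iff.1 hcont x₀ hx₀ (ε / 4) (by positivity)
    -- Half of `η`, so that the corners of the closed box lie in the open ball of radius `η`.
    set δ := η / 2 with hδ
    have hδ0 : 0 < δ := by positivity
    set lo : Fin m → ℝ := fun i => max (x₀ i - δ) 0 with hlo
    set hi : Fin m → ℝ := fun i => min (x₀ i + δ) 1 with hhi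
    have h0 : ∀ i, 0 ≤ x₀ i := fun i => hx₀.1 i
    have h1 : ∀ i, x₀ i ≤ 1 := fun i => hx₀.2 i
    have hlo_mem : lo ∈ Set.Icc (0 : Fin m → ℝ) 1 :=
      ⟨fun i => le_max_right _ _, fun i => max_le (by simpa using by linarith [h1 i]) (by simp)⟩
    have hhi_mem : hi ∈ Set.Icc (0 : Fin m → ℝ) 1 :=
      ⟨fun i => le_min (by simpa using by linarith [h0 i]) (by simp), fun i => min_le_right _ _⟩
    have hlo_dist : dist lo x₀ < η := by
      refine lt_of_le_of_lt ((dist_pi_le_iff hδ0.le).2 fun i => ?_) (half_lt_self hη)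
      rw [Real.dist_eq, abs_le]
      constructor
      · linarith [le_max_left (x₀ i - δ) 0]
      · linarith [max_le (show x₀ i - δ ≤ x₀ i by linarith) (h0 i)]
    have hhi_dist : dist hi x₀ < η := by
      refine lt_of_le_of_lt ((dist_pi_le_iff hδ0.le).2 fun i => ?_) (half_lt_self hη)
      rw [Real.dist_eq, abs_le]
      constructor
      · linarith [le_min (show x₀ i ≤ x₀ i + δ by linarith) (h1 i)]
      · linarith [min_le_left (x₀ i + δ) 1]
    refine ⟨Set.Icc 0 1 ∩ Metric.ball x₀ δ,
      inter_mem_nhdsWithin _ (Metric.ball_mem_nhds x₀ hδ0), ?_⟩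
    filter_upwards [Metric.tendsto_nhds.1 (hlim lo hlo_mem) (ε / 4) (by positivity),
      Metric.tendsto_nhds.1 (hlim hi hhi_mem) (ε / 4) (by positivity)] with n hnlo hnhi
    rintro x ⟨hx, hxb⟩
    have hxd : dist x x₀ < δ := hxb
    have hxi : ∀ i, |x i - x₀ i| < δ := fun i =>
      lt_of_le_of_lt (by simpa [Real.dist_eq] using dist_le_pi_dist x x₀ i) hxd
    have hlox : f n lo ≤ f n x := hmono n _ hlo_mem _ hx fun i =>
      max_le (by linarith [(abs_lt.1 (hxi i)).1]) (hx.1 i)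
    have hxhi : f n x ≤ f n hi := hmono n _ hx _ hhi_mem fun i =>
      le_min (by linarith [(abs_lt.1 (hxi i)).2]) (hx.2 i)
    have hgx := hg x hx (by linarith)
    have hglo := hg lo hlo_mem hlo_dist
    have hghi := hg hi hhi_mem hhi_dist
    rw [Real.dist_eq, abs_lt] at *
    constructor <;> linarith
  have hunif := (tendstoLocallyUniformlyOn_iff_tendstoUniformlyOn_of_compact isCompact_Icc).1 hloc
  rw [Metric.tendsto_nhds]
  intro ε hε
  filter_upwards [Metric.tendstoUniformlyOn_iff.1 hunif (ε / 2) (half_pos hε)] with n hn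
  have hnonneg : 0 ≤ ⨆ x ∈ Set.Icc (0 : Fin m → ℝ) 1, |f n x - g x| :=
    Real.iSup_nonneg fun x => Real.iSup_nonneg fun _ => abs_nonneg _
  -- For `x` outside the cube the inner supremum is over an empty family, with value `0 ≤ ε / 2`.
  have hle : ⨆ x ∈ Set.Icc (0 : Fin m → ℝ) 1, |f n x - g x| ≤ ε / 2 := by
    refine Real.iSup_le (fun x => Real.iSup_le (fun hx => ?_) (half_pos hε).le) (half_pos hε).le
    rw [abs_sub_comm, ← Real.dist_eq]
    exact (hn x hx).le
  rw [Real.dist_eq, sub_zero, abs_of_nonneg hnonneg]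
  linarith
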